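/- Let d ≥ 1 and let Φ be a complex-valued Schwartz function on ℝ^d with ∫_{ℝ^d} Φ = 0 satisfying: for every ξ ∈ ℝ^d \ {0} there exist 0 < 2a ≤ b < ∞ such that Φ̂(εξ) ≠ 0 for all ε ∈ (a, b]. Then there exists a complex-valued Schwartz function Ψ on ℝ^d with ∫_{ℝ^d} Ψ = 0 such that for every ξ ∈ ℝ^d \ {0} the series Σ_{j∈ℤ} Φ̂(2^j ξ) · conj(Ψ̂(2^j ξ)) converges absolutely with sum 1. -/

import Mathlib

open MeasureTheory Real FourierTransform Complex

noncomputable section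

/-- `ℝ^d`. -/
abbrev Ed (d : ℕ) := EuclideanSpace ℝ (Fin d)

open scoped ContDiff

/-- A compact cover argument: boundedly many dyadic scales suffice on the unit annulus. -/
lemma exists_bounded_scale {d : ℕ} (F : Ed d → ℂ) (hF : Continuous F)
    (h : ∀ ξ : Ed d, ξ ≠ 0 → ∃ j : ℤ, F ((2 : ℝ) ^ j • ξ) ≠ 0) :
    ∃ N : ℕ, ∀ ξ : Ed d, 1 ≤ ‖ξ‖ → ‖ξ‖ ≤ 2 →
      ∃ j : ℤ, -(N : ℤ) ≤ j ∧ j ≤ N ∧ F ((2 : ℝ) ^ j • ξ) ≠ 0 := by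
  have hK : IsCompact ({ξ : Ed d | 1 ≤ ‖ξ‖} ∩ Metric.closedBall 0 2) :=
    (isCompact_closedBall (0 : Ed d) 2).inter_left (isClosed_le continuous_const continuous_norm)
  obtain ⟨N, hN⟩ := hK.elim_directed_cover
    (fun N : ℕ => {ξ : Ed d | ∃ j : ℤ, -(N : ℤ) ≤ j ∧ j ≤ N ∧ F ((2 : ℝ) ^ j • ξ) ≠ 0})
    (by
      intro N
      have : {ξ : Ed d | ∃ j : ℤ, -(N : ℤ) ≤ j ∧ j ≤ N ∧ F ((2 : ℝ) ^ j • ξ) ≠ 0}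
          = ⋃ j ∈ {j : ℤ | -(N : ℤ) ≤ j ∧ j ≤ N}, {ξ : Ed d | F ((2 : ℝ) ^ j • ξ) ≠ 0} := by
        ext ξ
        simp [and_assoc]
      rw [this]
      refine isOpen_biUnion fun j _ => ?_
      exact isOpen_ne_fun (by fun_prop) continuous_const)
    (by
      rintro ξ ⟨h1, -⟩
      have h0 : ξ ≠ 0 := by
        rintro rfl
        simp at h1
        linarith
      obtain ⟨j, hj⟩ := h ξ h0
      refine Set.mem_iUnion.2 ⟨j.natAbs, j, ?_, ?_, hj⟩ <;> omega)
    (by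
      refine directed_of_isDirected_le ?_
      rintro m n hmn ξ ⟨j, h1, h2, h3⟩
      exact ⟨j, by omega, by omega, h3⟩)
  refine ⟨N, fun ξ h1 h2 => hN ⟨h1, by simpa using h2⟩⟩

lemma exists_cutoff {d : ℕ} (F : Ed d → ℂ) (hF : Continuous F)
    (h : ∀ ξ : Ed d, ξ ≠ 0 → ∃ j : ℤ, F ((2 : ℝ) ^ j • ξ) ≠ 0) :
    ∃ (M : ℤ) (η : Ed d → ℝ), ContDiff ℝ ∞ η ∧ (∀ x, 0 ≤ η x) ∧
      (∀ x, η x ≠ 0 → (2 : ℝ) ^ (-M) ≤ ‖x‖ ∧ ‖x‖ ≤ (2 : ℝ) ^ M) ∧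
      ∀ ξ : Ed d, ξ ≠ 0 → ∃ j : ℤ, F ((2 : ℝ) ^ j • ξ) ≠ 0 ∧ η ((2 : ℝ) ^ j • ξ) ≠ 0 := by
  obtain ⟨N, hN⟩ := exists_bounded_scale F hF h
  let B : ContDiffBump (0 : Ed d) :=
    { rIn := (2 : ℝ) ^ ((N : ℤ) + 1), rOut := (2 : ℝ) ^ ((N : ℤ) + 2), rIn_pos := by positivity
      rIn_lt_rOut := zpow_lt_zpow_right₀ (by norm_num) (by omega) }
  let b : ContDiffBump (0 : Ed d) :=
    { rIn := (2 : ℝ) ^ (-((N : ℤ) + 2)), rOut := (2 : ℝ) ^ (-((N : ℤ) + 1))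
      rIn_pos := by positivity
      rIn_lt_rOut := zpow_lt_zpow_right₀ (by norm_num) (by omega) }
  refine ⟨N + 2, fun x => B x * (1 - b x), ?_, ?_, ?_, ?_⟩
  · exact B.contDiff.mul (contDiff_const.sub b.contDiff)
  · intro x
    exact mul_nonneg B.nonneg (sub_nonneg.2 b.le_one)
  · intro x hx
    constructor
    · by_contra hlt
      apply hx
      have : b x = 1 := b.one_of_mem_closedBall (by
        rw [mem_closedBall_zero_iff]; exact (not_le.1 hlt).le)
      simp [this]
    · by_contra hlt
      apply hx
      have : B x = 0 := B.zero_of_le_dist (by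
        rw [dist_zero_right]; exact (not_le.1 hlt).le)
      simp [this]
  · intro ξ hξ
    obtain ⟨n, hn1, hn2⟩ := exists_mem_Ico_zpow (norm_pos_iff.2 hξ) (one_lt_two : (1 : ℝ) < 2)
    have hnorm : ∀ k : ℤ, ‖(2 : ℝ) ^ k • ξ‖ = (2 : ℝ) ^ k * ‖ξ‖ := by
      intro k
      rw [norm_smul, Real.norm_of_nonneg (by positivity)]
    have e1 : 1 ≤ ‖(2 : ℝ) ^ (-n) • ξ‖ := by
      rw [hnorm]
      calc (1 : ℝ) = 2 ^ (-n) * 2 ^ n := by rw [← zpow_add₀ two_ne_zero]; simp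
        _ ≤ _ := by gcongr
    have e2 : ‖(2 : ℝ) ^ (-n) • ξ‖ ≤ 2 := by
      rw [hnorm]
      calc (2 : ℝ) ^ (-n) * ‖ξ‖ ≤ 2 ^ (-n) * 2 ^ (n + 1) := by gcongr
        _ = 2 := by rw [← zpow_add₀ two_ne_zero]; simp
    obtain ⟨j, hj1, hj2, hj⟩ := hN _ e1 e2
    rw [smul_smul, ← zpow_add₀ two_ne_zero] at hj
    refine ⟨j + -n, hj, ?_⟩
    have e3 : ‖(2 : ℝ) ^ (j + -n) • ξ‖ = 2 ^ j * ‖(2 : ℝ) ^ (-n) • ξ‖ := by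
      rw [hnorm, hnorm, zpow_add₀ two_ne_zero, mul_assoc]
    have l1 : (2 : ℝ) ^ (-((N : ℤ) + 1)) ≤ ‖(2 : ℝ) ^ (j + -n) • ξ‖ := by
      rw [e3]
      calc (2 : ℝ) ^ (-((N : ℤ) + 1)) ≤ 2 ^ j :=
            zpow_le_zpow_right₀ (by norm_num) (by omega)
        _ = 2 ^ j * 1 := by ring
        _ ≤ _ := by gcongr
    have l2 : ‖(2 : ℝ) ^ (j + -n) • ξ‖ < (2 : ℝ) ^ ((N : ℤ) + 2) := by
      rw [e3]
      calc _ ≤ (2 : ℝ) ^ j * 2 := by gcongr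
        _ = 2 ^ (j + 1) := by rw [zpow_add₀ two_ne_zero]; simp
        _ < _ := zpow_lt_zpow_right₀ (by norm_num) (by omega)
    have hB : B ((2 : ℝ) ^ (j + -n) • ξ) ≠ 0 :=
      (B.pos_of_mem_ball (by rw [mem_ball_zero_iff]; exact l2)).ne'
    have hb : b ((2 : ℝ) ^ (j + -n) • ξ) = 0 :=
      b.zero_of_le_dist (by rw [dist_zero_right]; exact l1)
    simpa [hb] using hB

lemma exists_companion_aux {d : ℕ} (F : Ed d → ℂ) (hF : ContDiff ℝ ∞ F)
    (h : ∀ ξ : Ed d, ξ ≠ 0 → ∃ j : ℤ, F ((2 : ℝ) ^ j • ξ) ≠ 0) :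
    ∃ H : Ed d → ℂ, ContDiff ℝ ∞ H ∧ HasCompactSupport H ∧ H 0 = 0 ∧
      ∀ ξ : Ed d, ξ ≠ 0 →
        Summable (fun j : ℤ =>
          ‖F (((2 : ℝ) ^ j) • ξ) * (starRingEnd ℂ) (H (((2 : ℝ) ^ j) • ξ))‖) ∧
        ∑' j : ℤ, F (((2 : ℝ) ^ j) • ξ) * (starRingEnd ℂ) (H (((2 : ℝ) ^ j) • ξ)) = 1 := by
  obtain ⟨M, η, hη, hη0, hηs, hηF⟩ := exists_cutoff F hF.continuous h
  set g : Ed d → ℝ := fun x => ‖F x‖ ^ 2 * η x with hg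
  have hgs : ContDiff ℝ ∞ g := (hF.norm_sq ℝ).mul hη
  have hg0 : ∀ x, 0 ≤ g x := fun x => mul_nonneg (by positivity) (hη0 x)
  have hnorm : ∀ (k : ℤ) (ξ : Ed d), ‖(2 : ℝ) ^ k • ξ‖ = (2 : ℝ) ^ k * ‖ξ‖ := by
    intro k ξ
    rw [norm_smul, Real.norm_of_nonneg (by positivity)]
  set S : Finset ℤ := Finset.Icc (-(2 * M)) (2 * M) with hS
  -- localisation of the scales
  have hloc : ∀ x : Ed d, (2 : ℝ) ^ (-M) ≤ ‖x‖ → ‖x‖ ≤ (2 : ℝ) ^ M →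
      ∀ j ∉ S, g ((2 : ℝ) ^ j • x) = 0 := by
    intro x h1 h2 j hj
    by_contra hne
    have hne' : η ((2 : ℝ) ^ j • x) ≠ 0 := fun h0 => hne (by simp [hg, h0])
    obtain ⟨h3, h4⟩ := hηs _ hne'
    rw [hnorm] at h3 h4
    apply hj
    rw [hS, Finset.mem_Icc]
    constructor
    · have : (2 : ℝ) ^ (-M) ≤ 2 ^ (j + M) := by
        rw [zpow_add₀ two_ne_zero]
        exact h3.trans (by gcongr)
      have := (zpow_le_zpow_iff_right₀ (one_lt_two : (1 : ℝ) < 2)).1 this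
      omega
    · have : (2 : ℝ) ^ (j + -M) ≤ 2 ^ M := by
        rw [zpow_add₀ two_ne_zero]
        refine le_trans ?_ h4
        gcongr
      have := (zpow_le_zpow_iff_right₀ (one_lt_two : (1 : ℝ) < 2)).1 this
      omega
  set GM : Ed d → ℝ := fun x => ∑ j ∈ S, g ((2 : ℝ) ^ j • x) with hGM
  have hGMs : ContDiff ℝ ∞ GM := by
    refine ContDiff.sum fun j _ => ?_
    exact hgs.comp (contDiff_const_smul _)
  have hsum : ∀ x : Ed d, (2 : ℝ) ^ (-M) ≤ ‖x‖ → ‖x‖ ≤ (2 : ℝ) ^ M →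
      HasSum (fun j : ℤ => g ((2 : ℝ) ^ j • x)) (GM x) := fun x h1 h2 =>
    hasSum_sum_of_ne_finset_zero (hloc x h1 h2)
  have hpos : ∀ x : Ed d, (2 : ℝ) ^ (-M) ≤ ‖x‖ → ‖x‖ ≤ (2 : ℝ) ^ M → GM x ≠ 0 := by
    intro x h1 h2
    have hx : x ≠ 0 := by
      rintro rfl
      rw [norm_zero] at h1
      exact absurd h1 (not_le.2 (by positivity))
    obtain ⟨j, hj1, hj2⟩ := hηF x hx
    have hgj : g ((2 : ℝ) ^ j • x) ≠ 0 :=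
      mul_ne_zero (pow_ne_zero _ (norm_ne_zero_iff.2 hj1)) hj2
    have hjS : j ∈ S := by
      by_contra hj
      exact hgj (hloc x h1 h2 j hj)
    exact (Finset.sum_pos' (f := fun i : ℤ => g ((2 : ℝ) ^ i • x)) (fun i _ => hg0 _)
      ⟨j, hjS, lt_of_le_of_ne (hg0 _) (Ne.symm hgj)⟩).ne'
  set H : Ed d → ℂ := fun x => ((η x / GM x : ℝ) : ℂ) * F x with hH
  have hH0 : ∀ x, η x = 0 → H x = 0 := fun x hx => by simp [hH, hx]
  refine ⟨H, ?_, ?_, ?_, ?_⟩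
  · rw [contDiff_iff_contDiffAt]
    intro x
    by_cases hx : (2 : ℝ) ^ (-M) ≤ ‖x‖ ∧ ‖x‖ ≤ (2 : ℝ) ^ M
    · have : ContDiffAt ℝ ∞ (fun x => η x / GM x) x :=
        hη.contDiffAt.div hGMs.contDiffAt (hpos x hx.1 hx.2)
      exact (Complex.ofRealCLM.contDiff.contDiffAt.comp x this).mul hF.contDiffAt
    · have hopen : IsOpen {x : Ed d | ¬ ((2 : ℝ) ^ (-M) ≤ ‖x‖ ∧ ‖x‖ ≤ (2 : ℝ) ^ M)} := by
        refine IsClosed.isOpen_compl (s := {x : Ed d | (2 : ℝ) ^ (-M) ≤ ‖x‖ ∧ ‖x‖ ≤ (2 : ℝ) ^ M})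
          (self := ?_)
        exact (isClosed_le continuous_const continuous_norm).inter
          (isClosed_le continuous_norm continuous_const)
      have : H =ᶠ[nhds x] fun _ => 0 := by
        filter_upwards [hopen.mem_nhds hx] with y hy
        apply hH0
        by_contra hne
        exact hy (hηs y hne)
      exact contDiffAt_const.congr_of_eventuallyEq this
  · refine HasCompactSupport.intro (isCompact_closedBall (0 : Ed d) ((2 : ℝ) ^ M)) ?_
    intro x hx
    apply hH0
    by_contra hne
    exact hx (by rw [mem_closedBall_zero_iff]; exact (hηs x hne).2)
  · apply hH0
    by_contra hne
    have := (hηs 0 hne).1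
    rw [norm_zero] at this
    exact absurd this (not_le.2 (by positivity))
  · intro ξ hξ
    obtain ⟨k, -, hk⟩ := hηF ξ hξ
    -- the full sum at `ξ` equals `GM (2 ^ l • ξ)` for each admissible `l`
    have hall : ∀ l : ℤ, η ((2 : ℝ) ^ l • ξ) ≠ 0 →
        HasSum (fun j : ℤ => g ((2 : ℝ) ^ j • ξ)) (GM ((2 : ℝ) ^ l • ξ)) := by
      intro l hl
      have h1 := hsum _ (hηs _ hl).1 (hηs _ hl).2
      rw [← (Equiv.addRight l).hasSum_iff]
      convert h1 using 2 with j
      simp [smul_smul, zpow_add₀ (two_ne_zero : (2 : ℝ) ≠ 0)]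
    set G := GM ((2 : ℝ) ^ k • ξ) with hG
    have hG0 : G ≠ 0 := hpos _ (hηs _ hk).1 (hηs _ hk).2
    have hterm : ∀ j : ℤ, F (((2 : ℝ) ^ j) • ξ) * (starRingEnd ℂ) (H (((2 : ℝ) ^ j) • ξ))
        = ((g ((2 : ℝ) ^ j • ξ) / G : ℝ) : ℂ) := by
      intro j
      by_cases hj : η ((2 : ℝ) ^ j • ξ) = 0
      · simp [hH, hg, hj]
      · have : GM ((2 : ℝ) ^ j • ξ) = G := (hall j hj).unique (hall k hk)
        simp only [hH, hg, this, map_mul, Complex.conj_ofReal]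
        rw [mul_left_comm, Complex.mul_conj']
        push_cast
        ring
    have hs : HasSum (fun j : ℤ => g ((2 : ℝ) ^ j • ξ) / G) 1 := by
      have := (hall k hk).div_const G
      rwa [div_self hG0] at this
    simp only [hterm]
    constructor
    · simpa only [Complex.norm_real] using hs.summable.norm
    · have := (Complex.hasSum_ofReal.2 hs).tsum_eq
      simpa using this

/-- Existence of a companion function `Ψ` satisfying the discrete reproducing
condition (1.6) under hypothesis (1.5). -/
theorem exists_companion_discrete_reproducing
    (d : ℕ) (hd : 1 ≤ d) (Φ : SchwartzMap (Ed d) ℂ)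
    (hΦ0 : ∫ s, Φ s = 0)
    (hΦnd : ∀ ξ : Ed d, ξ ≠ 0 → ∃ a b : ℝ, 0 < a ∧ 2 * a ≤ b ∧
      ∀ ε ∈ Set.Ioc a b, 𝓕 (fun s => Φ s) (ε • ξ) ≠ 0) :
    ∃ Ψ : SchwartzMap (Ed d) ℂ, (∫ s, Ψ s = 0) ∧
      ∀ ξ : Ed d, ξ ≠ 0 →
        Summable (fun j : ℤ =>
          ‖𝓕 (fun s => Φ s) (((2 : ℝ) ^ j) • ξ) *
            (starRingEnd ℂ) (𝓕 (fun s => Ψ s) (((2 : ℝ) ^ j) • ξ))‖) ∧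
        ∑' j : ℤ, 𝓕 (fun s => Φ s) (((2 : ℝ) ^ j) • ξ) *
            (starRingEnd ℂ) (𝓕 (fun s => Ψ s) (((2 : ℝ) ^ j) • ξ)) = 1 := by
  have hF : ContDiff ℝ ∞ (𝓕 (fun s => Φ s)) := (𝓕 Φ).smooth ⊤
  obtain ⟨H, hH1, hH2, hH0, hH⟩ := exists_companion_aux (𝓕 (fun s => Φ s)) hF (by
    intro ξ hξ
    obtain ⟨a, b, ha, hab, hne⟩ := hΦnd ξ hξ
    obtain ⟨n, hn1, hn2⟩ := exists_mem_Ico_zpow (by positivity : 0 < 2 * a)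
      (one_lt_two : (1 : ℝ) < 2)
    refine ⟨n, hne _ ⟨?_, hn1.trans hab⟩⟩
    rw [zpow_add₀ two_ne_zero, zpow_one] at hn2
    linarith)
  let HS : SchwartzMap (Ed d) ℂ := hH2.toSchwartzMap hH1
  let P : SchwartzMap (Ed d) ℂ := 𝓕⁻ HS
  have key : 𝓕 (fun s => P s) = H := by
    change ((𝓕 (𝓕⁻ HS : SchwartzMap (Ed d) ℂ) : SchwartzMap (Ed d) ℂ) : Ed d → ℂ) = H
    rw [FourierTransform.fourier_fourierInv_eq]
    rfl
  refine ⟨P, ?_, ?_⟩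
  · have h0 := congrFun key 0
    rw [hH0, Real.fourier_eq] at h0
    simpa using h0
  · rw [key]
    exact hH
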